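/- Let R be a commutative Noetherian local ring and X, M finitely generated R-modules. If M belongs to the extension closure ext(X), then depth M ≥ depth X. If M belongs to the resolving closure res(X), then depth M ≥ min(depth X, depth R). -/

import Mathlib

open CategoryTheory IsLocalRing

noncomputable section

variable (R : Type) [CommRing R] [IsLocalRing R]

/-- The depth of a module over a Noetherian local ring: the supremum of the
lengths of (weakly) regular sequences on `M` contained in the maximal ideal.
With this definition `depth 0 = ∞`. -/
noncomputable def mdepth (M : Type) [AddCommGroup M] [Module R M] : ℕ∞ :=
  ⨆ (rs : List R) (_ : (∀ r ∈ rs, r ∈ maximalIdeal R) ∧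
    RingTheory.Sequence.IsWeaklyRegular M rs), (rs.length : ℕ∞)

/-! Over a Noetherian local ring with residue field `k`, Rees' theorem says that a finitely
generated module `M` has depth at least `d` exactly when `Ext^i(k, M) = 0` for all `i < d`. By the
long exact sequence of `Ext(k, -)`, this vanishing passes to direct summands, extensions and kernels
of epimorphisms, and the modules for which it holds therefore contain the closure in question. -/

open Abelian RingTheory.Sequence

universe w v u

section ExtVanishing

variable {C : Type u} [Category.{v} C] [Abelian C] [HasExt.{w} C]

/-- The objects `X` with `Ext^i(K, X) = 0` for all `i < d`. When `K` is the residue field of a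
Noetherian local ring, the finitely generated modules among them are those of depth at least `d`.
The bound lies in `ℕ∞` so that infinite depth is covered. -/
def extVanishing (K : C) (d : ℕ∞) : ObjectProperty C :=
  fun X => ∀ i : ℕ, (i : ℕ∞) < d → Subsingleton (Ext K X i)

variable {K : C} {d : ℕ∞}

lemma extVanishing_antitone (K : C) : Antitone (extVanishing K) :=
  fun _ _ hd _ hX i hi => hX i (hi.trans_le hd)

instance : (extVanishing K d).IsStableUnderRetracts where
  of_retract {X Y} r hY i hi := by
    have := hY i hi
    refine subsingleton_of_forall_eq 0 fun z => ?_
    calc z = (z.comp (Ext.mk₀ r.i) (add_zero i)).comp (Ext.mk₀ r.r) (add_zero i) := by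
          rw [Ext.comp_assoc_of_third_deg_zero, Ext.mk₀_comp_mk₀, r.retract, Ext.comp_mk₀_id]
      _ = 0 := by rw [Subsingleton.elim (z.comp _ _) 0, Ext.zero_comp]

instance : (extVanishing K d).IsClosedUnderExtensions where
  prop_X₂_of_shortExact {S} hS h₁ h₃ i hi := by
    refine subsingleton_of_forall_eq 0 fun z => ?_
    obtain ⟨y, rfl⟩ := Ext.covariant_sequence_exact₂ K hS z ((h₃ i hi).elim _ _)
    rw [(h₁ i hi).elim y 0, Ext.zero_comp]

lemma ext_eq_zero_of_comp_f_eq_zero {S : ShortComplex C} (hS : S.ShortExact) {i : ℕ}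
    (h₃ : ∀ j, j + 1 = i → Subsingleton (Ext K S.X₃ j)) (z : Ext K S.X₁ i)
    (hz : z.comp (Ext.mk₀ S.f) (add_zero i) = 0) : z = 0 := by
  cases i with
  | zero =>
    have := hS.mono_f
    exact Ext.postcomp_mk₀_injective_of_mono K S.f (by simpa using hz)
  | succ j =>
    obtain ⟨y, rfl⟩ := Ext.covariant_sequence_exact₁ K hS z hz rfl
    rw [(h₃ j rfl).elim y 0, Ext.zero_comp]

lemma extVanishing_X₁_of_shortExact {S : ShortComplex C} (hS : S.ShortExact)
    (h₂ : extVanishing K d S.X₂) (h₃ : extVanishing K (d - 1) S.X₃) : extVanishing K d S.X₁ := by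
  intro i hi
  refine subsingleton_of_forall_eq 0 fun z => ?_
  refine ext_eq_zero_of_comp_f_eq_zero hS ?_ z ((h₂ i hi).elim _ _)
  rintro j rfl
  exact h₃ j (lt_tsub_iff_right.mpr (by exact_mod_cast hi))

end ExtVanishing

section Modules

variable {A : Type u} [CommRing A]

lemma isWeaklyRegular_of_subsingleton (M : Type v) [AddCommGroup M] [Module A M]
    [Subsingleton M] (rs : List A) : IsWeaklyRegular M rs :=
  ⟨fun _ _ => Function.injective_of_subsingleton _⟩

lemma annihilator_residueField [IsLocalRing A] :
    Module.annihilator A (ResidueField A) = maximalIdeal A :=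
  Ideal.annihilator_quotient

lemma shortExact_of_range_eq_ker {L M N : ModuleCat.{v} A} {f : L →ₗ[A] M} {g : M →ₗ[A] N}
    (hf : Function.Injective f) (hg : Function.Surjective g)
    (hfg : LinearMap.range f = LinearMap.ker g) :
    (ModuleCat.shortComplexOfCompEqZero f g
      (LinearMap.exact_iff.mpr hfg.symm).linearMap_comp_eq_zero).ShortExact :=
  ModuleCat.shortComplex_shortExact _ (LinearMap.exact_iff.mpr hfg.symm) hf hg

lemma prop_of_linearEquiv_prod (P : ObjectProperty (ModuleCat.{v} A)) [P.IsStableUnderRetracts]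
    {L M N : ModuleCat.{v} A} (e : L ≃ₗ[A] M × N) (hL : P L) : P M :=
  P.prop_of_retract
    { i := ModuleCat.ofHom (e.symm.toLinearMap ∘ₗ LinearMap.inl A M N)
      r := ModuleCat.ofHom (LinearMap.fst A M N ∘ₗ e.toLinearMap)
      retract := by ext; simp } hL

lemma comp_mk₀_smul_id_eq_zero [Small.{v} A] {K M : ModuleCat.{v} A} {a : A}
    (ha : a ∈ Module.annihilator A K) {i : ℕ} (z : Ext K M i) :
    z.comp (Ext.mk₀ (a • 𝟙 M)) (add_zero i) = 0 :=
  DFunLike.congr_fun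
    (AddCommGrpCat.ofHom_injective (Ext.postcomp_smul_id_eq_zero_of_mem_annihilator ha i)) z

lemma extVanishing_of_isWeaklyRegular [Small.{v} A] {K M : ModuleCat.{v} A} {rs : List A}
    (hK : ∀ a ∈ rs, a ∈ Module.annihilator A K) (hrs : IsWeaklyRegular M rs) :
    extVanishing K rs.length M := by
  induction rs generalizing M with
  | nil => exact fun i hi => absurd hi not_lt_zero
  | cons a rs ih =>
    obtain ⟨ha, hrs⟩ := (isWeaklyRegular_cons_iff M a rs).mp hrs
    have quotient_vanishing : extVanishing K rs.length (M.smulShortComplex a).X₃ :=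
      ih (fun b hb => hK b (List.mem_cons_of_mem a hb)) hrs
    intro i hi
    -- Multiplication by `a` on `Ext^i(K, M)` is zero, since `a` kills `K`, but also injective.
    refine subsingleton_of_forall_eq 0 fun z => ?_
    refine ext_eq_zero_of_comp_f_eq_zero ha.smulShortComplex_shortExact ?_ z
      (comp_mk₀_smul_id_eq_zero (hK a List.mem_cons_self) z)
    rintro j rfl
    exact quotient_vanishing j (by simpa using hi)

end Modules

section Depth

variable {R}

lemma length_le_mdepth {M : Type} [AddCommGroup M] [Module R M] {rs : List R}
    (hm : ∀ r ∈ rs, r ∈ maximalIdeal R) (hrs : IsWeaklyRegular M rs) :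
    (rs.length : ℕ∞) ≤ mdepth R M :=
  le_iSup₂_of_le rs ⟨hm, hrs⟩ le_rfl

lemma mdepth_eq_top_of_subsingleton (M : Type) [AddCommGroup M] [Module R M] [Subsingleton M] :
    mdepth R M = ⊤ := by
  refine ENat.eq_top_iff_forall_ge.mpr fun n => ?_
  have zero_mem_maximal : ∀ r ∈ List.replicate n (0 : R), r ∈ maximalIdeal R := fun r hr =>
    List.eq_of_mem_replicate hr ▸ zero_mem _
  simpa using length_le_mdepth zero_mem_maximal (isWeaklyRegular_of_subsingleton M _)

lemma extVanishing_mdepth (M : ModuleCat.{0} R) :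
    extVanishing (ModuleCat.of R (ResidueField R)) (mdepth R M) M := by
  intro i hi
  simp only [mdepth, lt_iSup_iff] at hi
  obtain ⟨rs, ⟨hm, hrs⟩, hi⟩ := hi
  exact extVanishing_of_isWeaklyRegular (K := ModuleCat.of R (ResidueField R))
    (fun r hr => annihilator_residueField.ge (hm r hr)) hrs i hi

lemma le_mdepth_of_extVanishing [IsNoetherianRing R] {M : ModuleCat.{0} R} [Module.Finite R M]
    {d : ℕ∞} (hM : extVanishing (ModuleCat.of R (ResidueField R)) d M) : d ≤ mdepth R M := by
  rcases subsingleton_or_nontrivial M with _ | _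
  · exact le_top.trans_eq (mdepth_eq_top_of_subsingleton M).symm
  have smul_top_lt : maximalIdeal R • (⊤ : Submodule R M) < ⊤ :=
    (Submodule.top_ne_ideal_smul_of_le_jacobson_annihilator
      (maximalIdeal_le_jacobson _)).symm.lt_top
  have support_residueField : Module.support R (ResidueField R) =
      PrimeSpectrum.zeroLocus (maximalIdeal R) := by
    rw [Module.support_eq_zeroLocus, annihilator_residueField]
  have : Module.Finite R (ModuleCat.of R (ResidueField R)) :=
    inferInstanceAs (Module.Finite R (ResidueField R))
  refine ENat.forall_natCast_le_iff_le.mp fun n hn => ?_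
  obtain ⟨rs, rfl, hm, hrs⟩ := ModuleCat.exists_isRegular_of_exists_subsingleton_ext
    (maximalIdeal R) n M smul_top_lt (ModuleCat.of R (ResidueField R))
    support_residueField fun i hi => hM i ((Nat.cast_lt.mpr hi).trans_le hn)
  exact length_le_mdepth hm hrs.toIsWeaklyRegular

end Depth

theorem depth_of_mem_ext_closure_and_res_closure_general
    [IsNoetherianRing R]
    (X M : ModuleCat.{0} R) [Module.Finite R ↥M] :
    ((∀ S : Set (ModuleCat.{0} R),
      (∀ A B : ModuleCat.{0} R, A ∈ S → Nonempty (A ≃ₗ[R] B) → B ∈ S) →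
      (∀ A B C : ModuleCat.{0} R, A ∈ S → Nonempty (A ≃ₗ[R] (↥B × ↥C)) → B ∈ S) →
      (∀ (A B C : ModuleCat.{0} R) (f : A →ₗ[R] B) (g : B →ₗ[R] C),
        Function.Injective f → Function.Surjective g →
        LinearMap.range f = LinearMap.ker g → A ∈ S → C ∈ S → B ∈ S) →
      X ∈ S → M ∈ S) →
      mdepth R ↥X ≤ mdepth R ↥M) ∧
    ((∀ S : Set (ModuleCat.{0} R),
      (∀ A B : ModuleCat.{0} R, A ∈ S → Nonempty (A ≃ₗ[R] B) → B ∈ S) →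
      (∀ A B C : ModuleCat.{0} R, A ∈ S → Nonempty (A ≃ₗ[R] (↥B × ↥C)) → B ∈ S) →
      (∀ (A B C : ModuleCat.{0} R) (f : A →ₗ[R] B) (g : B →ₗ[R] C),
        Function.Injective f → Function.Surjective g →
        LinearMap.range f = LinearMap.ker g → A ∈ S → C ∈ S → B ∈ S) →
      (∀ (A B C : ModuleCat.{0} R) (f : A →ₗ[R] B) (g : B →ₗ[R] C),
        Function.Injective f → Function.Surjective g →
        LinearMap.range f = LinearMap.ker g → B ∈ S → C ∈ S → A ∈ S) →
      ModuleCat.of R R ∈ S → X ∈ S → M ∈ S) →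
      min (mdepth R ↥X) (mdepth R R) ≤ mdepth R ↥M) := by
  let P (d : ℕ∞) : ObjectProperty (ModuleCat.{0} R) :=
    extVanishing (ModuleCat.of R (ResidueField R)) d
  have iso (d) (A B : ModuleCat.{0} R) : P d A → Nonempty (A ≃ₗ[R] B) → P d B :=
    fun hA ⟨e⟩ => (P d).prop_of_iso e.toModuleIso hA
  have summand (d) (A B C : ModuleCat.{0} R) : P d A → Nonempty (A ≃ₗ[R] (↥B × ↥C)) → P d B :=
    fun hA ⟨e⟩ => prop_of_linearEquiv_prod (P d) e hA
  have extension (d) (A B C : ModuleCat.{0} R) (f : A →ₗ[R] B) (g : B →ₗ[R] C)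
      (hf : Function.Injective f) (hg : Function.Surjective g)
      (hfg : LinearMap.range f = LinearMap.ker g) : P d A → P d C → P d B :=
    (P d).prop_X₂_of_shortExact (shortExact_of_range_eq_ker hf hg hfg)
  have kernel (d) (A B C : ModuleCat.{0} R) (f : A →ₗ[R] B) (g : B →ₗ[R] C)
      (hf : Function.Injective f) (hg : Function.Surjective g)
      (hfg : LinearMap.range f = LinearMap.ker g) (hB : P d B) (hC : P d C) : P d A :=
    extVanishing_X₁_of_shortExact (shortExact_of_range_eq_ker hf hg hfg) hB
      (extVanishing_antitone _ tsub_le_self _ hC)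
  refine ⟨fun hM => le_mdepth_of_extVanishing ?_, fun hM => le_mdepth_of_extVanishing ?_⟩
  · exact hM {A | P _ A} (iso _) (summand _) (extension _) (extVanishing_mdepth X)
  · exact hM {A | P _ A} (iso _) (summand _) (extension _) (kernel _)
      (extVanishing_antitone _ (min_le_right _ _) _ (extVanishing_mdepth (ModuleCat.of R R)))
      (extVanishing_antitone _ (min_le_left _ _) _ (extVanishing_mdepth X))

/-- if `M` belongs to the extension closure of `X` then
`depth M ≥ depth X`; if `M` belongs to the resolving closure of `X` then
`depth M ≥ min (depth X) (depth R)`. -/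
theorem depth_of_mem_ext_closure_and_res_closure
    [IsNoetherianRing R]
    (X M : ModuleCat.{0} R) [Module.Finite R ↥X] [Module.Finite R ↥M] :
    ((∀ S : Set (ModuleCat.{0} R),
      (∀ A B : ModuleCat.{0} R, A ∈ S → Nonempty (A ≃ₗ[R] B) → B ∈ S) →
      (∀ A B C : ModuleCat.{0} R, A ∈ S → Nonempty (A ≃ₗ[R] (↥B × ↥C)) → B ∈ S) →
      (∀ (A B C : ModuleCat.{0} R) (f : A →ₗ[R] B) (g : B →ₗ[R] C),
        Function.Injective f → Function.Surjective g →
        LinearMap.range f = LinearMap.ker g → A ∈ S → C ∈ S → B ∈ S) →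
      X ∈ S → M ∈ S) →
      mdepth R ↥X ≤ mdepth R ↥M) ∧
    ((∀ S : Set (ModuleCat.{0} R),
      (∀ A B : ModuleCat.{0} R, A ∈ S → Nonempty (A ≃ₗ[R] B) → B ∈ S) →
      (∀ A B C : ModuleCat.{0} R, A ∈ S → Nonempty (A ≃ₗ[R] (↥B × ↥C)) → B ∈ S) →
      (∀ (A B C : ModuleCat.{0} R) (f : A →ₗ[R] B) (g : B →ₗ[R] C),
        Function.Injective f → Function.Surjective g →
        LinearMap.range f = LinearMap.ker g → A ∈ S → C ∈ S → B ∈ S) →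
      (∀ (A B C : ModuleCat.{0} R) (f : A →ₗ[R] B) (g : B →ₗ[R] C),
        Function.Injective f → Function.Surjective g →
        LinearMap.range f = LinearMap.ker g → B ∈ S → C ∈ S → A ∈ S) →
      ModuleCat.of R R ∈ S → X ∈ S → M ∈ S) →
      min (mdepth R ↥X) (mdepth R R) ≤ mdepth R ↥M) :=
  depth_of_mem_ext_closure_and_res_closure_general R X M
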